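/- Let M be a finite length graded S-module on P^n and let P_{n-k}(M) be its (n-k)-th syzygy bundle, presented by 0 → L'_{n+1} → ... → L'_{n-k+1} → P_{n-k}(M) → 0. If n ≥ 4k and k ≥ 2, then H^{2k-3}_*(S²P_{n-k}(M)) = 0 and H^{2k-2}_*(S²P_{n-k}(M)) = 0. -/

import Mathlib

/-!
Background setup (the paper works on projective space `ℙⁿ` over a field `K`):
we encode a coherent sheaf on `ℙⁿ_K` by a module `M` over the homogeneous coordinate
ring `S = K[X₀,…,Xₙ]` (namely `M = Γ_*` of the sheaf), and the intermediate cohomology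
module `H^i_*(F) = ⊕_ν H^i(ℙⁿ, F(ν))` (for `i ≥ 1`) by the local cohomology module
`H^{i+1}_𝔪(M)` at the irrelevant maximal ideal `𝔪 = (X₀,…,Xₙ)`, to which it is
canonically isomorphic.
-/

open CategoryTheory TensorProduct

noncomputable section

/-- The homogeneous coordinate ring `S = K[X₀,…,Xₙ]` of `ℙⁿ`. -/
abbrev PolyS (K : Type) [Field K] (n : ℕ) : Type := MvPolynomial (Fin (n+1)) K

variable (K : Type) [Field K] (n : ℕ)

/-- The irrelevant maximal ideal `𝔪 = (X₀,…,Xₙ)` of `S`. -/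
def irrel : Ideal (PolyS K n) := Ideal.span (Set.range MvPolynomial.X)

/-- `H^i_*` of the sheaf on `ℙⁿ` associated to the `S`-module `M`, encoded (for `i ≥ 1`)
as the local cohomology module `H^{i+1}_𝔪(M)`. -/
def Hstar (i : ℕ) (M : Type) [AddCommGroup M] [Module (PolyS K n) M] :
    ModuleCat (PolyS K n) :=
  (localCohomology (irrel K n) (i+1)).obj (ModuleCat.of (PolyS K n) M)

/-- `M` is (the module of sections `Γ_*` of) an algebraic vector bundle on `ℙⁿ`:
finitely generated, depth `≥ 2` at `𝔪` (i.e. `H⁰_𝔪(M) = H¹_𝔪(M) = 0`, so `M = Γ_*(M̃)`),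
and locally free at every prime other than the irrelevant ideal. -/
structure IsBundleModule (M : Type) [AddCommGroup M] [Module (PolyS K n) M] : Prop where
  finite : Module.Finite (PolyS K n) M
  h0 : Subsingleton ((localCohomology (irrel K n) 0).obj (ModuleCat.of (PolyS K n) M))
  h1 : Subsingleton ((localCohomology (irrel K n) 1).obj (ModuleCat.of (PolyS K n) M))
  locFree : ∀ p : PrimeSpectrum (PolyS K n), p.asIdeal ≠ irrel K n →
    Module.Free (Localization.AtPrime p.asIdeal) (LocalizedModule p.asIdeal.primeCompl M)

/-- `M` represents a vector bundle of rank two on `ℙⁿ`. -/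
structure IsRankTwoBundleModule (M : Type) [AddCommGroup M] [Module (PolyS K n) M]
    extends IsBundleModule K n M : Prop where
  rank2 : ∀ p : PrimeSpectrum (PolyS K n), p.asIdeal ≠ irrel K n →
    Module.rank (Localization.AtPrime p.asIdeal) (LocalizedModule p.asIdeal.primeCompl M) = 2

/-- A finite length module which is moreover supported at the irrelevant ideal: the
(ungraded avatar of the) notion of a *graded* `S`-module of finite length. -/
def IsGradedFiniteLength (N : Type) [AddCommGroup N] [Module (PolyS K n) N] : Prop :=
  IsFiniteLength (PolyS K n) N ∧
    ∃ c : ℕ, (irrel K n) ^ c ≤ Module.annihilator (PolyS K n) N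

/-- A minimal graded free resolution `⋯ → L₁ → L₀ → N → 0` of an `S`-module `N`
(minimality: all differentials have entries in the maximal ideal `𝔪`).
Here `d i : L (i+1) → L i` and `P_k(N)`, the `k`-th syzygy module, is `range (d k)`,
i.e. the image of `f_{k+1} : L_{k+1} → L_k`. -/
structure MinimalResolution (N : Type) [AddCommGroup N] [Module (PolyS K n) N] where
  L : ℕ → Type
  [addCommGroup : ∀ i, AddCommGroup (L i)]
  [module : ∀ i, Module (PolyS K n) (L i)]
  free : ∀ i, Module.Free (PolyS K n) (L i)
  finite : ∀ i, Module.Finite (PolyS K n) (L i)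
  d : ∀ i : ℕ, L (i+1) →ₗ[PolyS K n] L i
  aug : L 0 →ₗ[PolyS K n] N
  aug_surjective : Function.Surjective aug
  exact0 : LinearMap.range (d 0) = LinearMap.ker aug
  exact : ∀ i : ℕ, LinearMap.range (d (i+1)) = LinearMap.ker (d i)
  minimal : ∀ i : ℕ, LinearMap.range (d i) ≤ (irrel K n) • (⊤ : Submodule (PolyS K n) (L i))
  minimal0 : LinearMap.ker aug ≤ (irrel K n) • (⊤ : Submodule (PolyS K n) (L 0))

attribute [instance] MinimalResolution.addCommGroup MinimalResolution.module

/-- The second symmetric power `S²M` of a module. -/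
def Sym2M (R : Type) [CommRing R] (M : Type) [AddCommGroup M] [Module R M] : Type :=
  (TensorProduct R M M) ⧸
    Submodule.span R {z : TensorProduct R M M | ∃ x y : M, z = x ⊗ₜ[R] y - y ⊗ₜ[R] x}

instance (R : Type) [CommRing R] (M : Type) [AddCommGroup M] [Module R M] :
    AddCommGroup (Sym2M R M) := by unfold Sym2M; infer_instance

instance (R : Type) [CommRing R] (M : Type) [AddCommGroup M] [Module R M] :
    Module R (Sym2M R M) := by unfold Sym2M; infer_instance

end

/-! ### Depth via vanishing of Ext -/

section Depth

open CategoryTheory.Abelian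

variable {R : Type} [CommRing R] (I : Ideal R)

/-- `X` has `I`-depth at least `d`, phrased by vanishing of Ext against `I`-power torsion modules. -/
def DepthGE (d : ℕ) (X : Type) [AddCommGroup X] [Module R X] : Prop :=
  ∀ (N : ModuleCat.{0} R) (c : ℕ), (∀ a ∈ I ^ c, ∀ y : N, a • y = 0) → ∀ j < d,
    ∀ e : Abelian.Ext.{0} N (ModuleCat.of R X) j, e = 0

variable {I}
variable {X Y Z : Type} [AddCommGroup X] [Module R X] [AddCommGroup Y] [Module R Y]
  [AddCommGroup Z] [Module R Z]

theorem DepthGE.mono {d d' : ℕ} (h : DepthGE I d X) (hd : d' ≤ d) : DepthGE I d' X :=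
  fun N c hN j hj e => h N c hN j (lt_of_lt_of_le hj hd) e

theorem DepthGE.zero : DepthGE I 0 X := fun _ _ _ j hj => absurd hj (by omega)

theorem DepthGE.retract {d : ℕ} (h : DepthGE I d Y) (f : X →ₗ[R] Y) (g : Y →ₗ[R] X)
    (hfg : ∀ x, g (f x) = x) : DepthGE I d X := by
  intro N c hN j hj e
  have h1 : ModuleCat.ofHom f ≫ ModuleCat.ofHom g = 𝟙 (ModuleCat.of R X) := by
    ext x
    exact hfg x
  have h2 : e = (e.comp (Ext.mk₀ (ModuleCat.ofHom f)) (add_zero j)).comp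
      (Ext.mk₀ (ModuleCat.ofHom g)) (add_zero j) := by
    rw [Ext.comp_assoc_of_third_deg_zero, Ext.mk₀_comp_mk₀, h1, Ext.comp_mk₀_id]
  rw [h2, h N c hN j hj (e.comp (Ext.mk₀ (ModuleCat.ofHom f)) (add_zero j)), Ext.zero_comp]

theorem DepthGE.equiv {d : ℕ} (h : DepthGE I d Y) (f : X ≃ₗ[R] Y) : DepthGE I d X :=
  h.retract f.toLinearMap f.symm.toLinearMap (by simp)

theorem shortExact_mk (f : X →ₗ[R] Y) (g : Y →ₗ[R] Z) (hf : Function.Injective f)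
    (hg : Function.Surjective g) (hfg : Function.Exact f g) :
    (ShortComplex.mk (ModuleCat.ofHom f) (ModuleCat.ofHom g)
      (by ext x; exact hfg.apply_apply_eq_zero x)).ShortExact := by
  apply ModuleCat.shortComplex_shortExact
  · exact hfg
  · exact hf
  · exact hg

theorem DepthGE.mid {d : ℕ} (f : X →ₗ[R] Y) (g : Y →ₗ[R] Z) (hf : Function.Injective f)
    (hg : Function.Surjective g) (hfg : Function.Exact f g)
    (hX : DepthGE I d X) (hZ : DepthGE I d Z) : DepthGE I d Y := by
  intro N c hN j hj e
  obtain ⟨x, hx⟩ := Ext.covariant_sequence_exact₂ N (shortExact_mk f g hf hg hfg) e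
    (hZ N c hN j hj _)
  rw [← hx, hX N c hN j hj x, Ext.zero_comp]

theorem DepthGE.right {d : ℕ} (f : X →ₗ[R] Y) (g : Y →ₗ[R] Z) (hf : Function.Injective f)
    (hg : Function.Surjective g) (hfg : Function.Exact f g)
    (hX : DepthGE I (d + 1) X) (hY : DepthGE I d Y) : DepthGE I d Z := by
  intro N c hN j hj e
  obtain ⟨x, hx⟩ := Ext.covariant_sequence_exact₃ N (shortExact_mk f g hf hg hfg) e rfl
    (hX N c hN (j + 1) (by omega) _)
  rw [← hx, hY N c hN j hj x, Ext.zero_comp]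

theorem DepthGE.zero_degree (f : X →ₗ[R] Y) (hf : Function.Injective f)
    (N : ModuleCat.{0} R) (e : Abelian.Ext.{0} N (ModuleCat.of R X) 0)
    (he : e.comp (Ext.mk₀ (ModuleCat.ofHom f)) (add_zero 0) = 0) : e = 0 := by
  have : Mono (ModuleCat.ofHom f) := (ModuleCat.mono_iff_injective _).2 hf
  apply Ext.postcomp_mk₀_injective_of_mono N (ModuleCat.ofHom f)
  simpa using he

theorem DepthGE.left {d : ℕ} (f : X →ₗ[R] Y) (g : Y →ₗ[R] Z) (hf : Function.Injective f)
    (hg : Function.Surjective g) (hfg : Function.Exact f g)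
    (hY : DepthGE I (d + 1) Y) (hZ : DepthGE I d Z) : DepthGE I (d + 1) X := by
  intro N c hN j hj e
  cases j with
  | zero => exact DepthGE.zero_degree f hf N e (hY N c hN 0 hj _)
  | succ j =>
    obtain ⟨x, hx⟩ := Ext.covariant_sequence_exact₁ N (shortExact_mk f g hf hg hfg) e
      (hY N c hN (j + 1) hj _) rfl
    rw [← hx, hZ N c hN j (by omega) x, Ext.zero_comp]

theorem DepthGE.of_regular {d : ℕ} (a : R) (ha : a ∈ I) (g : X →ₗ[R] Z)
    (hf : ∀ x : X, a • x = 0 → x = 0) (hg : Function.Surjective g)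
    (hfg : ∀ x, g x = 0 ↔ ∃ y, a • y = x)
    (hZ : DepthGE I d Z) : DepthGE I (d + 1) X := by
  intro N c hN j hj e
  have hinj : Function.Injective (a • LinearMap.id : X →ₗ[R] X) := by
    rw [injective_iff_map_eq_zero]
    intro x hx
    exact hf x hx
  have hex : Function.Exact (a • LinearMap.id : X →ₗ[R] X) g := by
    intro x
    rw [hfg]
    rfl
  have hmk : ModuleCat.ofHom (a • LinearMap.id : X →ₗ[R] X) = a • 𝟙 (ModuleCat.of R X) := rfl
  have key : ∀ e : Abelian.Ext.{0} N (ModuleCat.of R X) j, a • e = 0 → e = 0 := by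
    intro e he
    rw [Ext.smul_eq_comp_mk₀, ← hmk] at he
    cases j with
    | zero => exact DepthGE.zero_degree _ hinj N e he
    | succ j =>
      obtain ⟨x, hx⟩ := Ext.covariant_sequence_exact₁ N (shortExact_mk _ g hinj hg hex) e he rfl
      rw [← hx, hZ N c hN j (by omega) x, Ext.zero_comp]
  have key2 : ∀ m : ℕ, a ^ m • e = 0 → e = 0 := by
    intro m
    induction m with
    | zero => intro h; simpa using h
    | succ m ih =>
      intro h
      apply ih
      apply key
      rw [smul_smul, ← pow_succ', h]
  apply key2 c
  have h0 : a ^ c • 𝟙 N = 0 := by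
    ext y
    exact hN _ (Ideal.pow_mem_pow ha c) y
  have : a ^ c • e = (Ext.mk₀ (a ^ c • 𝟙 N)).comp e (zero_add j) := by
    rw [Ext.mk₀_smul, Ext.smul_comp, Ext.mk₀_id_comp]
  rw [this, h0, Ext.mk₀_zero, Ext.zero_comp]

theorem DepthGE.prod {d : ℕ} (hX : DepthGE I d X) (hY : DepthGE I d Y) : DepthGE I d (X × Y) :=
  DepthGE.mid (LinearMap.inl R X Y) (LinearMap.snd R X Y) LinearMap.inl_injective
    LinearMap.snd_surjective Function.Exact.inl_snd hX hY

theorem DepthGE.of_subsingleton {d : ℕ} [Subsingleton X] : DepthGE I d X := by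
  intro N c hN j hj e
  have h1 : 𝟙 (ModuleCat.of R X) = 0 := by
    ext x
    exact Subsingleton.elim (α := X) _ _
  rw [← Ext.comp_mk₀_id e, h1, Ext.mk₀_zero, Ext.comp_zero]

theorem DepthGE.pi {d : ℕ} (hX : DepthGE I d X) (r : ℕ) : DepthGE I d (Fin r → X) := by
  induction r with
  | zero => exact DepthGE.of_subsingleton
  | succ r ih => exact (hX.prod ih).equiv (Fin.consLinearEquiv R (fun _ => X)).symm

/-- Elements of `X` killed by a power of `I` vanish when the depth is positive. -/
theorem DepthGE.torsion {d : ℕ} (hX : DepthGE I (d + 1) X) (x : X) (c : ℕ)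
    (hx : ∀ a ∈ I ^ c, a • x = 0) : x = 0 := by
  let N := Submodule.span R {x}
  have h := hX (ModuleCat.of R N) c (by
    rintro a ha ⟨y, hy⟩
    obtain ⟨b, rfl⟩ := Submodule.mem_span_singleton.1 hy
    apply Subtype.ext
    change a • b • x = 0
    rw [smul_comm, hx a ha, smul_zero]) 0 (by omega) (Ext.mk₀ (ModuleCat.ofHom N.subtype))
  rw [Ext.mk₀_eq_zero_iff] at h
  have h2 := congrArg (fun f => f.hom ⟨x, Submodule.mem_span_singleton_self x⟩) h
  exact h2

theorem DepthGE.vanish {d : ℕ} (hX : DepthGE I d X) (j : ℕ) (hj : j < d) :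
    Subsingleton ((localCohomology I j).obj (ModuleCat.of R X)) := by
  have key : ∀ t : ℕ, Limits.IsZero (((_root_.Ext R (ModuleCat.{0} R) j).obj
      (Opposite.op (ModuleCat.of R (R ⧸ I ^ t)))).obj (ModuleCat.of R X)) := by
    intro t
    set N := ModuleCat.of R (R ⧸ I ^ t)
    have hN : ∀ a ∈ I ^ t, ∀ y : N, a • y = 0 := by
      intro a ha y
      obtain ⟨y, rfl⟩ := Ideal.Quotient.mk_surjective y
      exact Ideal.Quotient.eq_zero_iff_mem.2 (Ideal.mul_mem_right _ _ ha)
    let P := ProjectiveResolution.of N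
    refine Limits.IsZero.of_iso ?_ (P.isoExt j _)
    rw [← HomologicalComplex.exactAt_iff_isZero_homology]
    cases j with
    | zero =>
      rw [HomologicalComplex.exactAt_iff' _ 0 0 1 (by simp) (by simp)]
      rw [ShortComplex.moduleCat_exact_iff]
      intro f hf
      change P.complex.X 0 ⟶ ModuleCat.of R X at f
      have hf' : P.complex.d 1 0 ≫ f = 0 := hf
      refine ⟨0, ?_⟩
      have hd : P.exact₀.desc f hf' = 0 := by
        have h := hX N t hN 0 hj (Ext.mk₀ (P.exact₀.desc f hf'))
        exact (Ext.mk₀_eq_zero_iff (C := ModuleCat.{0} R) (M := N) (N := ModuleCat.of R X)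
          (P.exact₀.desc f hf')).1 h
      have h3 : P.π.f 0 ≫ P.exact₀.desc f hf' = f := P.exact₀.g_desc f hf'
      rw [hd, Limits.comp_zero] at h3
      rw [map_zero]
      exact h3
    | succ j =>
      rw [HomologicalComplex.exactAt_iff' _ j (j + 1) (j + 2) (by simp) (by simp)]
      rw [ShortComplex.moduleCat_exact_iff]
      intro f hf
      change P.complex.X (j + 1) ⟶ ModuleCat.of R X at f
      have hf' : P.complex.d (j + 2) (j + 1) ≫ f = 0 := hf
      have h := hX N t hN (j + 1) hj (P.extMk f (j + 2) rfl hf')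
      obtain ⟨g, hg⟩ := (P.extMk_eq_zero_iff f (j + 2) rfl hf' j rfl).1 h
      exact ⟨g, hg⟩
  have hz : Limits.IsZero ((localCohomology I j).obj (ModuleCat.of R X)) := by
    have : Limits.HasColimit (localCohomology.diagram (localCohomology.idealPowersDiagram I) j) :=
      localCohomology.hasColimitDiagram.{0, 0} _ _
    have hc := Limits.isColimitOfPreserves
      ((evaluation (ModuleCat.{0} R) (ModuleCat.{0} R)).obj (ModuleCat.of R X))
      (Limits.colimit.isColimit
        (localCohomology.diagram (localCohomology.idealPowersDiagram I) j))
    rw [Limits.IsZero.iff_id_eq_zero]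
    apply hc.hom_ext
    intro t
    exact (key t.unop.unop).eq_of_src _ _
  exact ModuleCat.subsingleton_of_isZero hz

end Depth

/-! ### The polynomial ring -/

section Generic

variable {R : Type} [CommRing R] {I : Ideal R}

theorem DepthGE.quot_step {d : ℕ} (J J' : Ideal R) (a : R) (ha : a ∈ I)
    (hJ : J' = J ⊔ Ideal.span {a}) (hreg : ∀ p, a * p ∈ J → p ∈ J)
    (h : DepthGE I d (R ⧸ J')) : DepthGE I (d + 1) (R ⧸ J) := by
  have hle : J ≤ J' := by rw [hJ]; exact le_sup_left
  refine DepthGE.of_regular a ha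
    (Submodule.factor hle) ?_ (Submodule.factor_surjective hle) ?_ h
  · intro x hx
    obtain ⟨p, rfl⟩ := Ideal.Quotient.mk_surjective x
    refine Ideal.Quotient.eq_zero_iff_mem.2 (hreg p ?_)
    exact Ideal.Quotient.eq_zero_iff_mem.1 hx
  · intro x
    obtain ⟨p, rfl⟩ := Ideal.Quotient.mk_surjective x
    have h1 : (Submodule.factor hle) (Ideal.Quotient.mk _ p) =
      Ideal.Quotient.mk J' p := rfl
    rw [h1, Ideal.Quotient.eq_zero_iff_mem, hJ, Submodule.mem_sup]
    constructor
    · rintro ⟨y, hy, z, hz, rfl⟩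
      obtain ⟨q, rfl⟩ := Ideal.mem_span_singleton.1 hz
      refine ⟨Ideal.Quotient.mk _ q, ?_⟩
      refine Ideal.Quotient.eq.2 ?_
      have : a • q - (y + a * q) = -y := by
        rw [smul_eq_mul]; ring
      rw [this]
      exact neg_mem hy
    · rintro ⟨y, hy⟩
      obtain ⟨q, rfl⟩ := Ideal.Quotient.mk_surjective y
      have h2 : p - a * q ∈ J := Ideal.Quotient.eq.1 hy.symm
      exact ⟨_, h2, a * q, Ideal.mem_span_singleton.2 ⟨q, rfl⟩, by ring⟩

theorem mem_smul_top_iff_repr {F : Type} [AddCommGroup F] [Module R F] {r : ℕ}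
    (b : Module.Basis (Fin r) R F) (J : Ideal R) (z : F) :
    z ∈ J • (⊤ : Submodule R F) ↔ ∀ i, b.repr z i ∈ J := by
  constructor
  · intro hz i
    induction hz using Submodule.smul_induction_on' with
    | smul a ha x hx => simpa using Ideal.mul_mem_right _ _ ha
    | add x hx y hy h1 h2 => simpa using add_mem h1 h2
  · intro h
    rw [← b.sum_repr z]
    exact sum_mem fun i _ => Submodule.smul_mem_smul (h i) trivial

end Generic

section Poly

variable {K : Type} [Field K] {n : ℕ}

/-- The ideal generated by the first `j` variables. -/
noncomputable def varIdeal (K : Type) [Field K] (n j : ℕ) : Ideal (PolyS K n) :=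
  Ideal.span (MvPolynomial.X '' {i : Fin (n + 1) | i.val < j})

theorem varIdeal_zero : varIdeal K n 0 = ⊥ := by
  simp [varIdeal]

theorem varIdeal_top : varIdeal K n (n + 1) = irrel K n := by
  have : {i : Fin (n + 1) | i.val < n + 1} = Set.univ := by
    ext i; simp [Nat.lt_succ_iff, Fin.is_le]
  rw [varIdeal, irrel, this, Set.image_univ]

theorem varIdeal_succ (j : ℕ) (hj : j < n + 1) :
    varIdeal K n (j + 1) = varIdeal K n j ⊔ Ideal.span {MvPolynomial.X ⟨j, hj⟩} := by
  have : {i : Fin (n + 1) | i.val < j + 1} = {i : Fin (n + 1) | i.val < j} ∪ {⟨j, hj⟩} := by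
    ext i
    simp only [Set.mem_ofPred_eq, Set.union_singleton, Set.mem_insert_iff, Fin.ext_iff]
    omega
  rw [varIdeal, varIdeal, this, Set.image_union, Ideal.span_union, Set.image_singleton]

theorem varIdeal_regular (j : ℕ) (hj : j < n + 1) (p : PolyS K n)
    (hp : MvPolynomial.X ⟨j, hj⟩ * p ∈ varIdeal K n j) : p ∈ varIdeal K n j := by
  rw [varIdeal, MvPolynomial.mem_ideal_span_X_image] at hp ⊢
  intro m hm
  obtain ⟨i, hi, hne⟩ := hp (Finsupp.single ⟨j, hj⟩ 1 + m) (by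
    rw [MvPolynomial.mem_support_iff, MvPolynomial.coeff_X_mul]
    exact MvPolynomial.mem_support_iff.1 hm)
  refine ⟨i, hi, ?_⟩
  have hij : (⟨j, hj⟩ : Fin (n + 1)) ≠ i := by
    rintro rfl
    exact absurd hi (by simp)
  simpa [Finsupp.single_apply, hij] using hne

theorem X_mem_irrel (i : Fin (n + 1)) : (MvPolynomial.X i : PolyS K n) ∈ irrel K n :=
  Ideal.subset_span ⟨i, rfl⟩

theorem one_notMem_irrel : (1 : PolyS K n) ∉ irrel K n := by
  intro h
  have : irrel K n ≤ RingHom.ker (MvPolynomial.constantCoeff (σ := Fin (n + 1)) (R := K)) := by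
    rw [irrel, Ideal.span_le]
    rintro _ ⟨i, rfl⟩
    simp [RingHom.mem_ker]
  have := this h
  simp [RingHom.mem_ker] at this

theorem depth_quot (s : ℕ) (hs : s ≤ n + 1) :
    DepthGE (irrel K n) s (PolyS K n ⧸ varIdeal K n (n + 1 - s)) := by
  induction s with
  | zero => exact DepthGE.zero
  | succ s ih =>
    obtain ⟨j, hj1, hj2⟩ : ∃ j, n + 1 - (s + 1) = j ∧ n + 1 - s = j + 1 :=
      ⟨n + 1 - (s + 1), rfl, by omega⟩
    have hj : j < n + 1 := by omega
    have ih := ih (by omega)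
    rw [hj1]
    rw [hj2] at ih
    exact DepthGE.quot_step _ _ _ (X_mem_irrel _) (varIdeal_succ j hj) (varIdeal_regular j hj) ih

theorem depth_poly : DepthGE (irrel K n) (n + 1) (PolyS K n) := by
  have h := depth_quot (K := K) (n := n) (n + 1) le_rfl
  have h0 : varIdeal K n (n + 1 - (n + 1)) = ⊥ := by rw [Nat.sub_self, varIdeal_zero]
  exact h.equiv (Submodule.quotEquivOfEqBot _ h0).symm

theorem depth_free_tensor (F Q : Type) [AddCommGroup F] [Module (PolyS K n) F]
    [AddCommGroup Q] [Module (PolyS K n) Q] [Module.Free (PolyS K n) F]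
    [Module.Finite (PolyS K n) F] {d : ℕ} (hQ : DepthGE (irrel K n) d Q) :
    DepthGE (irrel K n) d (F ⊗[PolyS K n] Q) := by
  let b := Module.finBasis (PolyS K n) F
  have e1 : F ⊗[PolyS K n] Q ≃ₗ[PolyS K n]
      ((Fin (Module.finrank (PolyS K n) F)) → PolyS K n) ⊗[PolyS K n] Q :=
    TensorProduct.congr b.equivFun (LinearEquiv.refl _ _)
  have e2 := (TensorProduct.comm (PolyS K n)
    ((Fin (Module.finrank (PolyS K n) F)) → PolyS K n) Q).trans
    (TensorProduct.piScalarRight (PolyS K n) (PolyS K n) Q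
      (Fin (Module.finrank (PolyS K n) F)))
  exact (hQ.pi _).equiv (e1.trans e2)

theorem depth_free (F : Type) [AddCommGroup F] [Module (PolyS K n) F]
    [Module.Free (PolyS K n) F] [Module.Finite (PolyS K n) F] :
    DepthGE (irrel K n) (n + 1) F :=
  (depth_poly.pi _).equiv (Module.finBasis (PolyS K n) F).equivFun

/-- Regularity of the variables on a free module. -/
theorem free_regular (F : Type) [AddCommGroup F] [Module (PolyS K n) F]
    [Module.Free (PolyS K n) F] [Module.Finite (PolyS K n) F] (j : ℕ) (hj : j < n + 1) (z : F)
    (hz : (MvPolynomial.X ⟨j, hj⟩ : PolyS K n) • z ∈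
      varIdeal K n j • (⊤ : Submodule (PolyS K n) F)) :
    z ∈ varIdeal K n j • (⊤ : Submodule (PolyS K n) F) := by
  let b := Module.finBasis (PolyS K n) F
  rw [mem_smul_top_iff_repr b] at hz ⊢
  intro i
  apply varIdeal_regular j hj
  simpa using hz i

end Poly

/-! ### Tensor squares and the Tate-type functor `T` -/

section TensorSquare

variable {R : Type} [CommRing R] {I : Ideal R}

/-- `t ↦ t - τ t` on `X ⊗ X`, where `τ` is the flip. -/
noncomputable def dl (R : Type) [CommRing R] (X : Type) [AddCommGroup X] [Module R X] :
    X ⊗[R] X →ₗ[R] X ⊗[R] X :=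
  LinearMap.id - (TensorProduct.comm R X X).toLinearMap

section

variable {X Y : Type} [AddCommGroup X] [Module R X] [AddCommGroup Y] [Module R Y]

theorem dl_apply (t : X ⊗[R] X) : dl R X t = t - TensorProduct.comm R X X t := rfl

theorem comm_map_self (f : X →ₗ[R] Y) (t : X ⊗[R] X) :
    TensorProduct.comm R Y Y (TensorProduct.map f f t) =
      TensorProduct.map f f (TensorProduct.comm R X X t) := by
  induction t with
  | zero => simp
  | tmul x y => simp
  | add x y hx hy => simp only [map_add, hx, hy]

theorem comm_comm_self (t : X ⊗[R] X) :
    TensorProduct.comm R X X (TensorProduct.comm R X X t) = t := by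
  induction t with
  | zero => simp
  | tmul x y => simp
  | add x y hx hy => simp only [map_add, hx, hy]

theorem dl_map (f : X →ₗ[R] Y) (t : X ⊗[R] X) :
    dl R Y (TensorProduct.map f f t) = TensorProduct.map f f (dl R X t) := by
  rw [dl_apply, dl_apply, map_sub, comm_map_self]

theorem add_self_of_two (h2 : (2 : R) = 0) (x : X) : x + x = 0 := by
  rw [← two_smul R x, h2, zero_smul]

theorem neg_of_two (h2 : (2 : R) = 0) (x : X) : -x = x := by
  rw [neg_eq_iff_add_eq_zero, add_self_of_two h2]

theorem dl_dl (h2 : (2 : R) = 0) (t : X ⊗[R] X) : dl R X (dl R X t) = 0 := by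
  rw [dl_apply, dl_apply, map_sub, comm_comm_self]
  have := add_self_of_two h2 (t - TensorProduct.comm R X X t)
  rw [← this]
  abel

variable (R X) in
/-- Symmetric tensors modulo trivially symmetric tensors. -/
abbrev TT : Type :=
  (LinearMap.ker (dl R X)) ⧸ (LinearMap.range (dl R X)).comap (LinearMap.ker (dl R X)).subtype

/-- Functoriality of `TT`. -/
noncomputable def ttmap (f : X →ₗ[R] Y) : TT R X →ₗ[R] TT R Y :=
  Submodule.mapQ _ _ ((TensorProduct.map f f).restrict (p := LinearMap.ker (dl R X))
    (q := LinearMap.ker (dl R Y)) (fun t ht => by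
      rw [LinearMap.mem_ker] at ht ⊢
      rw [dl_map, ht, map_zero])) (by
    rintro ⟨t, ht⟩ ⟨v, hv⟩
    refine ⟨TensorProduct.map f f v, ?_⟩
    rw [dl_map, hv]
    rfl)

/-- The class of a symmetric tensor. -/
noncomputable def ttmk (t : X ⊗[R] X) (ht : dl R X t = 0) : TT R X :=
  Submodule.Quotient.mk ⟨t, ht⟩

theorem ttmk_surj (z : TT R X) : ∃ t ht, ttmk (R := R) (X := X) t ht = z := by
  obtain ⟨⟨t, ht⟩, rfl⟩ := Submodule.Quotient.mk_surjective _ z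
  exact ⟨t, ht, rfl⟩

theorem ttmk_eq_iff (t s : X ⊗[R] X) (ht hs) :
    ttmk (R := R) t ht = ttmk s hs ↔ ∃ v, dl R X v = t - s := by
  rw [ttmk, ttmk, Submodule.Quotient.eq]
  rfl

theorem ttmk_eq_zero_iff (t : X ⊗[R] X) (ht) :
    ttmk (R := R) t ht = 0 ↔ ∃ v, dl R X v = t := by
  rw [ttmk, Submodule.Quotient.mk_eq_zero]
  rfl

theorem ttmap_ttmk (f : X →ₗ[R] Y) (t : X ⊗[R] X) (ht) :
    ttmap f (ttmk t ht) = ttmk (TensorProduct.map f f t) (by rw [dl_map, ht, map_zero]) := rfl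

theorem smul_ttmk (a : R) (t : X ⊗[R] X) (ht) :
    a • ttmk t ht = ttmk (a • t) (by rw [map_smul, ht, smul_zero]) := rfl

end

section SES

variable {P1 F P : Type} [AddCommGroup P1] [Module R P1] [AddCommGroup F] [Module R F]
  [AddCommGroup P] [Module R P] (i : P1 →ₗ[R] F) (q : F →ₗ[R] P)

theorem key_decomp (h2 : (2 : R) = 0) (hiq : Function.Exact i q) (hq : Function.Surjective q)
    (hinj1 : Function.Injective (i.lTensor P))
    (hinj2 : Function.Injective (TensorProduct.map i i))
    (u : F ⊗[R] F) (hu : TensorProduct.map q q u = 0) (hdu : dl R F u = 0) :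
    ∃ (α : F ⊗[R] F) (p : P1 ⊗[R] P1), TensorProduct.map q q α = 0 ∧ dl R P1 p = 0 ∧
      u = TensorProduct.map i i p + dl R F α := by
  have hker := TensorProduct.map_ker hiq hq hiq hq
  have hu' : u ∈ LinearMap.ker (TensorProduct.map q q) := hu
  rw [hker, Submodule.mem_sup] at hu'
  obtain ⟨_, ⟨β, rfl⟩, _, ⟨α, rfl⟩, rfl⟩ := hu'
  obtain ⟨γ, rfl⟩ := (TensorProduct.comm R P1 F).surjective β
  -- flip compatibilities
  have c1 : ∀ x : P1 ⊗[R] F, i.lTensor F (TensorProduct.comm R P1 F x) =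
      TensorProduct.comm R F F (i.rTensor F x) := by
    intro x
    induction x with
    | zero => simp
    | tmul x y => simp
    | add x y hx hy => simp only [map_add, hx, hy]
  have c2 : ∀ x : F ⊗[R] P1, i.lTensor P (q.rTensor P1 x) = q.rTensor F (i.lTensor F x) := by
    intro x
    induction x with
    | zero => simp
    | tmul x y => simp
    | add x y hx hy => simp only [map_add, hx, hy]
  have c3 : ∀ x : P1 ⊗[R] P1, i.lTensor F (i.rTensor P1 x) = TensorProduct.map i i x := by
    intro x
    induction x with
    | zero => simp
    | tmul x y => simp
    | add x y hx hy => simp only [map_add, hx, hy]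
  have c4 : ∀ x : P1 ⊗[R] F, q.rTensor F (i.rTensor F x) = 0 := by
    intro x
    exact (rTensor_exact F hiq hq).apply_apply_eq_zero x
  have c5 : ∀ x : P1 ⊗[R] F, TensorProduct.map q q (i.rTensor F x) = 0 := by
    intro x
    have : i.rTensor F x ∈ LinearMap.ker (TensorProduct.map q q) := by
      rw [hker]
      exact Submodule.mem_sup_right ⟨x, rfl⟩
    exact this
  rw [c1] at hdu ⊢
  rw [dl_apply, map_add, comm_comm_self] at hdu
  have hε : i.rTensor F (α - γ) = TensorProduct.comm R F F (i.rTensor F (α - γ)) := by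
    rw [map_sub, map_sub, ← sub_eq_zero, ← hdu]
    abel
  obtain ⟨p, hp⟩ : ∃ p, i.rTensor P1 p = TensorProduct.comm R P1 F (α - γ) := by
    apply ((rTensor_exact P1 hiq hq) _).1
    apply hinj1
    rw [c2, c1, ← hε, c4, map_zero]
  have hp2 : TensorProduct.map i i p = i.rTensor F (α - γ) := by
    rw [← c3, hp, c1, ← hε]
  refine ⟨i.rTensor F α, p, c5 α, ?_, ?_⟩
  · apply hinj2
    rw [← dl_map, hp2, dl_apply, ← hε, sub_self, map_zero]
  · have hC : TensorProduct.comm R F F (i.rTensor F γ) =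
        TensorProduct.comm R F F (i.rTensor F α) - i.rTensor F (α - γ) := by
      rw [hε, map_sub, map_sub]
      abel
    rw [hC, hp2, dl_apply]
    generalize i.rTensor F (α - γ) = E
    generalize i.rTensor F α = G
    have e1 := neg_of_two h2 E
    have e2 := neg_of_two h2 (TensorProduct.comm R F F G)
    rw [sub_eq_add_neg, sub_eq_add_neg, e1, e2]
    abel

theorem TT_depth (h2 : (2 : R) = 0) (hiq : Function.Exact i q) (hq : Function.Surjective q)
    (hinj1 : Function.Injective (i.lTensor P))
    (hinj2 : Function.Injective (TensorProduct.map i i))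
    (hinj3 : ∀ p, dl R P1 p = 0 → (∃ v, dl R F v = TensorProduct.map i i p) →
      ∃ v, dl R P1 v = p) {d : ℕ}
    (hP1 : DepthGE I (d + 1) (TT R P1)) (hF : DepthGE I d (TT R F)) :
    DepthGE I d (TT R P) := by
  have hqi : ∀ p, TensorProduct.map q q (TensorProduct.map i i p) = 0 := by
    intro p
    induction p with
    | zero => simp
    | tmul x y => simp [hiq.apply_apply_eq_zero]
    | add x y hx hy => simp only [map_add, hx, hy, add_zero]
  refine DepthGE.right (ttmap i) (ttmap q) ?_ ?_ ?_ hP1 hF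
  · rw [injective_iff_map_eq_zero]
    intro z hz
    obtain ⟨t, ht, rfl⟩ := ttmk_surj z
    rw [ttmap_ttmk, ttmk_eq_zero_iff] at hz
    rw [ttmk_eq_zero_iff]
    exact hinj3 t ht hz
  · intro z
    obtain ⟨w, hw, rfl⟩ := ttmk_surj z
    obtain ⟨v, rfl⟩ := TensorProduct.map_surjective hq hq w
    obtain ⟨α, p, hα, hp, hv⟩ := key_decomp i q h2 hiq hq hinj1 hinj2 (dl R F v)
      (by rw [← dl_map]; exact hw) (dl_dl h2 v)
    obtain ⟨p', rfl⟩ := hinj3 p hp ⟨v - α, by rw [map_sub, hv]; abel⟩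
    refine ⟨ttmk (v - α - TensorProduct.map i i p') ?_, ?_⟩
    · rw [map_sub, map_sub, dl_map, hv]
      abel
    · rw [ttmap_ttmk, ttmk_eq_iff]
      refine ⟨0, ?_⟩
      rw [map_sub, map_sub, hα, hqi, map_zero]
      abel
  · intro z
    obtain ⟨v, hv, rfl⟩ := ttmk_surj z
    constructor
    · intro h
      rw [ttmap_ttmk, ttmk_eq_zero_iff] at h
      obtain ⟨w', hw'⟩ := h
      obtain ⟨v', rfl⟩ := TensorProduct.map_surjective hq hq w'
      obtain ⟨α, p, hα, hp, hvv⟩ := key_decomp i q h2 hiq hq hinj1 hinj2 (v - dl R F v')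
        (by rw [map_sub, ← dl_map, hw', sub_self]) (by rw [map_sub, hv, dl_dl h2, sub_zero])
      refine ⟨ttmk p hp, ?_⟩
      rw [ttmap_ttmk, ttmk_eq_iff]
      refine ⟨-(α + v'), ?_⟩
      rw [map_neg, map_add]
      rw [sub_eq_iff_eq_add] at hvv
      rw [hvv]
      abel
    · rintro ⟨y, hy⟩
      obtain ⟨p, hp, rfl⟩ := ttmk_surj y
      rw [← hy, ttmap_ttmk, ttmap_ttmk, ttmk_eq_zero_iff]
      exact ⟨0, by rw [hqi, map_zero]⟩

variable {i} in
theorem tensor_inj (Q : Type) [AddCommGroup Q] [Module R Q] {c : ℕ}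
    (hs : ∀ a ∈ I ^ c, ∃ r : F →ₗ[R] P1, ∀ x, r (i x) = a • x)
    (h : DepthGE I 1 (P1 ⊗[R] Q)) : Function.Injective (i.rTensor Q) := by
  rw [injective_iff_map_eq_zero]
  intro t ht
  apply h.torsion t c
  intro a ha
  obtain ⟨r, hr⟩ := hs a ha
  have : r.rTensor Q (i.rTensor Q t) = a • t := by
    rw [← LinearMap.comp_apply, ← LinearMap.rTensor_comp]
    have : r ∘ₗ i = a • LinearMap.id := by
      ext x; exact hr x
    rw [this, LinearMap.rTensor_smul, LinearMap.rTensor_id]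
    rfl
  rw [← this, ht, map_zero]

theorem tensor_depth (Q : Type) [AddCommGroup Q] [Module R Q] {c : ℕ}
    (hiq : Function.Exact i q) (hq : Function.Surjective q)
    (hs : ∀ a ∈ I ^ c, ∃ r : F →ₗ[R] P1, ∀ x, r (i x) = a • x) {d : ℕ}
    (h : DepthGE I (d + 1) (P1 ⊗[R] Q)) (hF : DepthGE I d (F ⊗[R] Q)) :
    DepthGE I d (P ⊗[R] Q) :=
  DepthGE.right (i.rTensor Q) (q.rTensor Q) (tensor_inj Q hs (h.mono (by omega)))
    (LinearMap.rTensor_surjective Q hq) (rTensor_exact Q hiq hq) h hF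

variable {i} in
theorem tt_inj [IsNoetherianRing R] {c : ℕ}
    (hs : ∀ a ∈ I ^ c, ∃ r : F →ₗ[R] P1, ∀ x, r (i x) = a • x)
    (h : DepthGE I 1 (TT R P1)) (p : P1 ⊗[R] P1) (hp : dl R P1 p = 0)
    (hv : ∃ v, dl R F v = TensorProduct.map i i p) : ∃ v, dl R P1 v = p := by
  obtain ⟨v, hv⟩ := hv
  rw [← ttmk_eq_zero_iff p hp]
  have hrad : I ^ c ≤ Ideal.radical (LinearMap.ker (LinearMap.toSpanSingleton R _ (ttmk p hp))) := by
    intro a ha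
    refine ⟨2, ?_⟩
    obtain ⟨r, hr⟩ := hs a ha
    rw [LinearMap.mem_ker, LinearMap.toSpanSingleton_apply, smul_ttmk, ttmk_eq_zero_iff]
    refine ⟨TensorProduct.map r r v, ?_⟩
    rw [dl_map, hv]
    generalize p = p
    induction p with
    | zero => simp
    | tmul x y => rw [TensorProduct.map_tmul]; simp only [hr, TensorProduct.map_tmul, TensorProduct.smul_tmul_smul, pow_two]
    | add x y hx hy => simp only [map_add, smul_add, hx, hy]
  obtain ⟨m, hm⟩ := Ideal.exists_pow_le_of_le_radical_of_fg hrad (IsNoetherian.noetherian _)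
  apply h.torsion _ (c * m)
  intro a ha
  rw [pow_mul] at ha
  exact hm ha

end SES

section FreeT

variable {F : Type} [AddCommGroup F] [Module R F]

theorem TT_free (h2 : (2 : R) = 0) {r : ℕ} (b : Module.Basis (Fin r) R F) {d : ℕ}
    (hR : DepthGE I d R) : DepthGE I d (TT R F) := by
  let bb := b.tensorProduct b
  have hc : ∀ t x y, bb.equivFun (TensorProduct.comm R F F t) (x, y) = bb.equivFun t (y, x) := by
    intro t x y
    induction t with
    | zero => simp
    | tmul u v => simp [bb, mul_comm]
    | add u v hu hv => simp only [map_add, Pi.add_apply, hu, hv]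
  let g : LinearMap.ker (dl R F) →ₗ[R] (Fin r → R) :=
    (LinearMap.pi fun x => (LinearMap.proj (x, x)) ∘ₗ bb.equivFun.toLinearMap) ∘ₗ
      (LinearMap.ker (dl R F)).subtype
  have hg : ∀ t ht x, g ⟨t, ht⟩ x = bb.equivFun t (x, x) := fun t ht x => rfl
  have hdl : ∀ t x y, bb.equivFun (dl R F t) (x, y) =
      bb.equivFun t (x, y) - bb.equivFun t (y, x) := by
    intro t x y
    rw [dl_apply, map_sub, Pi.sub_apply, hc]
  have hsurj : Function.Surjective g := by
    intro f
    refine ⟨⟨bb.equivFun.symm (fun z => if z.1 = z.2 then f z.1 else 0), ?_⟩, ?_⟩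
    · rw [LinearMap.mem_ker]
      apply bb.equivFun.injective
      ext ⟨x, y⟩
      rw [hdl, map_zero, LinearEquiv.apply_symm_apply]
      by_cases hxy : x = y
      · simp [hxy]
      · simp [hxy, Ne.symm hxy]
    · ext x
      rw [hg, LinearEquiv.apply_symm_apply]
      simp
  have hker : (LinearMap.range (dl R F)).comap (LinearMap.ker (dl R F)).subtype =
      LinearMap.ker g := by
    ext ⟨t, ht⟩
    rw [LinearMap.mem_ker]
    constructor
    · rintro ⟨v, hv⟩
      ext x
      rw [hg]
      change dl R F v = t at hv
      rw [← hv, hdl, sub_self]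
      rfl
    · intro h
      refine ⟨bb.equivFun.symm (fun z => if z.1 < z.2 then bb.equivFun t z else 0), ?_⟩
      change _ = t
      apply bb.equivFun.injective
      ext ⟨x, y⟩
      rw [hdl, LinearEquiv.apply_symm_apply]
      have hsym : bb.equivFun t (x, y) = bb.equivFun t (y, x) := by
        have := hdl t x y
        rw [LinearMap.mem_ker.1 ht, map_zero] at this
        exact (sub_eq_zero.1 this.symm)
      rcases lt_trichotomy x y with hxy | hxy | hxy
      · simp [hxy, not_lt_of_gt hxy]
      · subst hxy
        have := congrFun h x
        rw [hg] at this
        rw [this]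
        simp
      · simp only [hxy, not_lt_of_gt hxy, if_true, if_false, zero_sub]
        rw [neg_of_two h2, hsym]
  exact (hR.pi r).equiv ((Submodule.quotEquivOfEq _ _ hker).trans
    (g.quotKerEquivOfSurjective hsurj))

end FreeT

section Sym

variable {X : Type} [AddCommGroup X] [Module R X]

theorem range_dl : LinearMap.range (dl R X) =
    Submodule.span R {z : X ⊗[R] X | ∃ x y : X, z = x ⊗ₜ[R] y - y ⊗ₜ[R] x} := by
  apply le_antisymm
  · rintro _ ⟨t, rfl⟩
    induction t with
    | zero => simp
    | tmul x y => exact Submodule.subset_span ⟨x, y, by simp [dl_apply]⟩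
    | add x y hx hy => rw [map_add]; exact add_mem hx hy
  · rw [Submodule.span_le]
    rintro _ ⟨x, y, rfl⟩
    exact ⟨x ⊗ₜ y, by simp [dl_apply]⟩

/-- The symmetric square as the quotient by the range of `dl`. -/
noncomputable def symEquiv :
    Sym2M R X ≃ₗ[R] ((X ⊗[R] X) ⧸ LinearMap.range (dl R X)) :=
  Submodule.quotEquivOfEq _ _ range_dl.symm

theorem sym_depth_of_half {d : ℕ} (c : R) (hc : c * 2 = 1) (h : DepthGE I d (X ⊗[R] X)) :
    DepthGE I d (Sym2M R X) := by
  refine DepthGE.equiv ?_ symEquiv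
  refine h.retract ((LinearMap.range (dl R X)).liftQ
    (c • (LinearMap.id + (TensorProduct.comm R X X).toLinearMap)) ?_)
    (LinearMap.range (dl R X)).mkQ ?_
  · rintro _ ⟨t, rfl⟩
    rw [LinearMap.mem_ker]
    simp only [LinearMap.smul_apply, LinearMap.add_apply, LinearMap.id_apply,
      LinearEquiv.coe_coe, dl_apply, map_sub, comm_comm_self]
    rw [add_comm (TensorProduct.comm R X X t) t, sub_self]
  · intro z
    obtain ⟨t, rfl⟩ := Submodule.Quotient.mk_surjective _ z
    rw [Submodule.liftQ_apply, Submodule.mkQ_apply, Submodule.Quotient.eq]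
    refine ⟨-(c • t), ?_⟩
    simp only [LinearMap.smul_apply, LinearMap.add_apply, LinearMap.id_apply,
      LinearEquiv.coe_coe, dl_apply, map_neg, map_smul, smul_add, smul_sub]
    have : t = c • t + c • t := by
      rw [← two_smul R (c • t), smul_smul, mul_comm, hc, one_smul]
    nth_rewrite 5 [this]
    abel

theorem sym_depth_of_two (h2 : (2 : R) = 0) {d : ℕ} (h : DepthGE I d (X ⊗[R] X))
    (hT : DepthGE I d (TT R X)) : DepthGE I d (Sym2M R X) := by
  refine DepthGE.equiv ?_ symEquiv
  let A := LinearMap.range (dl R X)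
  let f : TT R X →ₗ[R] ((X ⊗[R] X) ⧸ A) :=
    Submodule.mapQ _ _ (LinearMap.ker (dl R X)).subtype le_rfl
  let g : ((X ⊗[R] X) ⧸ A) →ₗ[R] A := A.liftQ (dl R X).rangeRestrict (by
    rintro _ ⟨t, rfl⟩
    rw [LinearMap.mem_ker]
    apply Subtype.ext
    exact dl_dl h2 t)
  have hf : Function.Injective f := by
    rw [injective_iff_map_eq_zero]
    intro z hz
    obtain ⟨t, ht, rfl⟩ := ttmk_surj z
    have hz' : (Submodule.Quotient.mk t : (X ⊗[R] X) ⧸ A) = 0 := hz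
    rw [Submodule.Quotient.mk_eq_zero] at hz'
    rw [ttmk_eq_zero_iff]
    exact hz'
  have hg : Function.Surjective g := by
    rintro ⟨_, ⟨t, rfl⟩⟩
    exact ⟨Submodule.Quotient.mk t, rfl⟩
  have hfg : Function.Exact f g := by
    intro z
    obtain ⟨t, rfl⟩ := Submodule.Quotient.mk_surjective _ z
    constructor
    · intro hz
      have hz' : dl R X t = 0 := congrArg Subtype.val hz
      exact ⟨ttmk t hz', rfl⟩
    · rintro ⟨y, hy⟩
      obtain ⟨s, hs, rfl⟩ := ttmk_surj y
      rw [← hy]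
      apply Subtype.ext
      exact hs
  have hA : ∀ j ≤ d, DepthGE I j A := by
    intro j
    induction j with
    | zero => intro _; exact DepthGE.zero
    | succ j ih =>
      intro hj
      have h1 := DepthGE.mid f g hf hg hfg (hT.mono (by omega)) (ih (by omega))
      exact DepthGE.left A.subtype A.mkQ A.injective_subtype A.mkQ_surjective
        (LinearMap.exact_subtype_mkQ A) (h.mono hj) h1
  exact DepthGE.mid f g hf hg hfg hT (hA d le_rfl)

end Sym

end TensorSquare

/-! ### Minimal resolutions -/

section Resolution

variable {K : Type} [Field K] {n : ℕ} {M : Type} [AddCommGroup M] [Module (PolyS K n) M]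
  (res : MinimalResolution K n M)

instance (i : ℕ) : Module.Free (PolyS K n) (res.L i) := res.free i
instance (i : ℕ) : Module.Finite (PolyS K n) (res.L i) := res.finite i

theorem res_d_d (i : ℕ) (y : res.L (i + 2)) : res.d i (res.d (i + 1) y) = 0 := by
  have : res.d (i + 1) y ∈ LinearMap.range (res.d (i + 1)) := ⟨y, rfl⟩
  rw [res.exact i] at this
  exact this

theorem map_smul_top_mem {R : Type} [CommRing R] {X Y : Type} [AddCommGroup X] [Module R X]
    [AddCommGroup Y] [Module R Y] (f : X →ₗ[R] Y) (J : Ideal R) (x : X)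
    (hx : x ∈ J • (⊤ : Submodule R X)) : f x ∈ J • (⊤ : Submodule R Y) := by
  have h : f x ∈ (J • (⊤ : Submodule R X)).map f := ⟨x, hx, rfl⟩
  rw [Submodule.map_smul''] at h
  exact Submodule.smul_mono le_rfl le_top h

theorem res_exact_mod (j : ℕ) (hj : j ≤ n + 1) : ∀ i, j ≤ i → ∀ y : res.L (i + 1),
    res.d i y ∈ varIdeal K n j • (⊤ : Submodule (PolyS K n) (res.L i)) →
    ∃ v : res.L (i + 2), y - res.d (i + 1) v ∈
      varIdeal K n j • (⊤ : Submodule (PolyS K n) (res.L (i + 1))) := by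
  induction j with
  | zero =>
    intro i _ y hy
    rw [varIdeal_zero, Submodule.bot_smul, Submodule.mem_bot] at hy
    have : y ∈ LinearMap.ker (res.d i) := hy
    rw [← res.exact i] at this
    obtain ⟨v, rfl⟩ := this
    exact ⟨v, by rw [sub_self]; exact zero_mem _⟩
  | succ j ih =>
    have hj' : j < n + 1 := by omega
    have ih := ih (by omega)
    intro i hi y hy
    obtain ⟨i, rfl⟩ : ∃ i', i = i' + 1 := ⟨i - 1, by omega⟩
    rw [varIdeal_succ j hj', Submodule.sup_smul, Submodule.mem_sup] at hy
    obtain ⟨u, hu, w, hw, huw⟩ := hy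
    rw [Submodule.ideal_span_singleton_smul] at hw
    obtain ⟨z, _, rfl⟩ := hw
    change u + (MvPolynomial.X ⟨j, hj'⟩ : PolyS K n) • z = _ at huw
    have hdz : res.d i z ∈ varIdeal K n j • (⊤ : Submodule (PolyS K n) (res.L i)) := by
      apply free_regular _ j hj'
      have h1 := res_d_d res i y
      rw [← huw, map_add, map_smul] at h1
      rw [← neg_eq_of_add_eq_zero_right h1]
      exact neg_mem (map_smul_top_mem _ _ _ hu)
    obtain ⟨w, hw⟩ := ih i (by omega) z hdz
    obtain ⟨v, hv⟩ := ih (i + 1) (by omega) (y - (MvPolynomial.X ⟨j, hj'⟩ : PolyS K n) • w) (by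
      rw [map_sub, map_smul, ← huw, add_sub_assoc, ← smul_sub]
      exact add_mem hu (Submodule.smul_mem _ _ hw))
    refine ⟨v, ?_⟩
    rw [varIdeal_succ j hj', Submodule.sup_smul]
    have e : y - res.d (i + 2) v = (y - (MvPolynomial.X ⟨j, hj'⟩ : PolyS K n) • w -
      res.d (i + 2) v) + (MvPolynomial.X ⟨j, hj'⟩ : PolyS K n) • w := by abel
    change y - res.d (i + 2) v ∈ _
    rw [e]
    exact Submodule.add_mem_sup hv
      (Submodule.smul_mem_smul (Ideal.mem_span_singleton_self _) trivial)

theorem res_L_zero : Subsingleton (res.L (n + 2)) := by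
  have h : ∀ y : res.L (n + 2), y ∈ irrel K n • (⊤ : Submodule (PolyS K n) (res.L (n + 2))) := by
    intro y
    obtain ⟨v, hv⟩ := res_exact_mod res (n + 1) le_rfl (n + 1) le_rfl y (by
      rw [varIdeal_top]
      exact res.minimal (n + 1) ⟨y, rfl⟩)
    rw [varIdeal_top] at hv
    have h2 := add_mem hv (res.minimal (n + 1 + 1) ⟨v, rfl⟩)
    rwa [sub_add_cancel] at h2
  let b := Module.finBasis (PolyS K n) (res.L (n + 2))
  have h0 : IsEmpty (Fin (Module.finrank (PolyS K n) (res.L (n + 2)))) := by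
    constructor
    intro x
    have := (mem_smul_top_iff_repr b _ _).1 (h (b x)) x
    rw [b.repr_self, Finsupp.single_eq_same] at this
    exact one_notMem_irrel this
  exact b.repr.toEquiv.subsingleton

/-- The last syzygy module is free. -/
noncomputable def lastEquiv : LinearMap.range (res.d n) ≃ₗ[PolyS K n] res.L (n + 1) :=
  (LinearEquiv.ofInjective (res.d n) (by
    rw [← LinearMap.ker_eq_bot, ← res.exact n]
    have := res_L_zero res
    rw [LinearMap.range_eq_bot]
    ext x
    rw [Subsingleton.elim x 0, map_zero, map_zero])).symm

theorem res_split_aux (a : PolyS K n) (ha : ∀ m : M, a • m = 0) (j : ℕ) :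
    ∃ r : res.L j →ₗ[PolyS K n] res.L j, (∀ y, r y ∈ LinearMap.range (res.d j)) ∧
      ∀ x ∈ LinearMap.range (res.d j), r x = a • x := by
  induction j with
  | zero =>
    refine ⟨a • LinearMap.id, ?_, fun x _ => rfl⟩
    intro y
    rw [res.exact0, LinearMap.mem_ker]
    simp [ha]
  | succ j ih =>
    obtain ⟨r, hr1, hr2⟩ := ih
    obtain ⟨h, hh⟩ := Module.projective_lifting_property (res.d j).rangeRestrict
      (r.codRestrict _ hr1) (res.d j).surjective_rangeRestrict
    have hh' : ∀ y, res.d j (h y) = r y := fun y =>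
      congrArg Subtype.val (LinearMap.congr_fun hh y)
    refine ⟨a • LinearMap.id - h ∘ₗ res.d j, ?_, ?_⟩
    · intro y
      rw [res.exact j, LinearMap.mem_ker]
      simp only [LinearMap.sub_apply, LinearMap.smul_apply, LinearMap.id_apply,
        LinearMap.comp_apply, map_sub, map_smul, hh']
      rw [hr2 _ ⟨y, rfl⟩, sub_self]
    · intro x hx
      rw [res.exact j, LinearMap.mem_ker] at hx
      simp [hx]

/-- The inclusion of a syzygy module. -/
noncomputable abbrev inc (j : ℕ) : LinearMap.range (res.d (j + 1)) →ₗ[PolyS K n] res.L (j + 1) :=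
  (LinearMap.range (res.d (j + 1))).subtype

/-- The projection onto a syzygy module. -/
noncomputable abbrev prj (j : ℕ) : res.L (j + 1) →ₗ[PolyS K n] LinearMap.range (res.d j) :=
  (res.d j).rangeRestrict

theorem inc_prj (j : ℕ) : Function.Exact (inc res j) (prj res j) := by
  intro y
  constructor
  · intro hy
    have h : y ∈ LinearMap.ker (res.d j) := congrArg Subtype.val hy
    rw [← res.exact j] at h
    exact ⟨⟨y, h⟩, rfl⟩
  · rintro ⟨⟨x, hx⟩, rfl⟩
    rw [res.exact j] at hx
    apply Subtype.ext
    exact hx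

theorem prj_surj (j : ℕ) : Function.Surjective (prj res j) :=
  (res.d j).surjective_rangeRestrict

theorem res_split {c : ℕ} (hc : irrel K n ^ c ≤ Module.annihilator (PolyS K n) M) (j : ℕ) :
    ∀ a ∈ irrel K n ^ c, ∃ r : res.L (j + 1) →ₗ[PolyS K n] LinearMap.range (res.d (j + 1)),
      ∀ x, r (inc res j x) = a • x := by
  intro a ha
  obtain ⟨r, h1, h2⟩ := res_split_aux res a
    (fun m => Module.mem_annihilator.1 (hc ha) m) (j + 1)
  refine ⟨r.codRestrict _ h1, ?_⟩
  rintro ⟨x, hx⟩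
  apply Subtype.ext
  exact h2 x hx

theorem syz_tensor_depth {c : ℕ} (hc : irrel K n ^ c ≤ Module.annihilator (PolyS K n) M)
    (Q : Type) [AddCommGroup Q] [Module (PolyS K n) Q] (t : ℕ)
    (hQ : DepthGE (irrel K n) (n + 1 - t) Q) (s : ℕ) : ∀ j, j + s = n → s + t ≤ n →
    DepthGE (irrel K n) (n + 1 - s - t) (LinearMap.range (res.d j) ⊗[PolyS K n] Q) := by
  induction s with
  | zero =>
    intro j hj _
    obtain rfl : j = n := by omega
    exact ((depth_free_tensor (res.L (j + 1)) Q hQ).equiv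
      (TensorProduct.congr (lastEquiv res) (LinearEquiv.refl _ _))).mono (by omega)
  | succ s ih =>
    intro j hj hst
    have h := ih (j + 1) (by omega) (by omega)
    exact tensor_depth (inc res j) (prj res j) Q (inc_prj res j) (prj_surj res j)
      (res_split res hc j) (h.mono (by omega))
      ((depth_free_tensor (res.L (j + 1)) Q hQ).mono (by omega))

theorem syz_depth {c : ℕ} (hc : irrel K n ^ c ≤ Module.annihilator (PolyS K n) M)
    (s j : ℕ) (hj : j + s = n) :
    DepthGE (irrel K n) (n + 1 - s) (LinearMap.range (res.d j)) :=
  ((syz_tensor_depth res hc (PolyS K n) 0 depth_poly s j hj (by omega)).equiv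
    (TensorProduct.rid (PolyS K n) _).symm).mono (by omega)

theorem syz_syz_depth {c : ℕ} (hc : irrel K n ^ c ≤ Module.annihilator (PolyS K n) M)
    (s j t l : ℕ) (hj : j + s = n) (hl : l + t = n) (hst : s + t ≤ n) :
    DepthGE (irrel K n) (n + 1 - s - t)
      (LinearMap.range (res.d j) ⊗[PolyS K n] LinearMap.range (res.d l)) :=
  syz_tensor_depth res hc _ t (syz_depth res hc t l hl) s j hj hst

theorem syz_tt_depth {c : ℕ} (hc : irrel K n ^ c ≤ Module.annihilator (PolyS K n) M)
    (h2 : (2 : PolyS K n) = 0) (s : ℕ) : ∀ j, j + s = n → 2 * s ≤ n →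
    DepthGE (irrel K n) (n + 1 - s) (TT (PolyS K n) (LinearMap.range (res.d j))) := by
  induction s with
  | zero =>
    intro j hj _
    obtain rfl : j = n := by omega
    exact TT_free h2 ((Module.finBasis _ (res.L (j + 1))).map (lastEquiv res).symm) depth_poly
  | succ s ih =>
    intro j hj hs
    have h := ih (j + 1) (by omega) (by omega)
    have hsp := res_split res hc j
    have i1 : Function.Injective ((inc res j).rTensor (LinearMap.range (res.d j))) :=
      tensor_inj _ hsp ((syz_syz_depth res hc s (j + 1) (s + 1) j (by omega) hj
        (by omega)).mono (by omega))
    have i2 : Function.Injective ((inc res j).rTensor (LinearMap.range (res.d (j + 1)))) :=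
      tensor_inj _ hsp ((syz_syz_depth res hc s (j + 1) s (j + 1) (by omega) (by omega)
        (by omega)).mono (by omega))
    refine TT_depth (inc res j) (prj res j) h2 (inc_prj res j) (prj_surj res j) ?_ ?_ ?_
      (h.mono (by omega)) ((TT_free h2 (Module.finBasis _ (res.L (j + 1))) depth_poly).mono
        (by omega))
    · exact (LinearMap.lTensor_inj_iff_rTensor_inj _ _).2 i1
    · have e : TensorProduct.map (inc res j) (inc res j) =
          (inc res j).lTensor (res.L (j + 1)) ∘ₗ
            (inc res j).rTensor (LinearMap.range (res.d (j + 1))) := by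
        rw [LinearMap.lTensor_comp_rTensor]
      rw [e, LinearMap.coe_comp]
      exact (Module.Flat.lTensor_preserves_injective_linearMap (inc res j)
        (Submodule.injective_subtype _)).comp i2
    · exact tt_inj hsp (h.mono (by omega))

theorem syz_sym_depth {c : ℕ} (hc : irrel K n ^ c ≤ Module.annihilator (PolyS K n) M)
    (s j : ℕ) (hj : j + s = n) (hs : 2 * s ≤ n) :
    DepthGE (irrel K n) (n + 1 - 2 * s)
      (Sym2M (PolyS K n) (LinearMap.range (res.d j))) := by
  have h := (syz_syz_depth res hc s j s j hj hj (by omega)).mono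
    (show n + 1 - 2 * s ≤ n + 1 - s - s by omega)
  by_cases h2 : (2 : K) = 0
  · refine sym_depth_of_two ?_ h ((syz_tt_depth res hc ?_ s j hj hs).mono (by omega))
    all_goals
      rw [← map_ofNat (MvPolynomial.C (σ := Fin (n + 1)) (R := K)) 2, h2, map_zero]
  · refine sym_depth_of_half (MvPolynomial.C (2 : K)⁻¹) ?_ h
    rw [← map_ofNat (MvPolynomial.C (σ := Fin (n + 1)) (R := K)) 2, ← map_mul,
      inv_mul_cancel₀ h2, map_one]

end Resolution

/-- Let `M` be a finite length graded `S`-module with `(n-k)`-th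
syzygy bundle `P_{n-k}(M)` on `ℙⁿ`.  If `n ≥ 4k` and `k ≥ 2`, then
`H^{2k-3}_*(S²P_{n-k}(M)) = 0` and `H^{2k-2}_*(S²P_{n-k}(M)) = 0`. -/
theorem sym2_high_syzygy_vanishing
    (K : Type) [Field K] (n k : ℕ) (hk : 2 ≤ k) (hn : 4 * k ≤ n)
    (M : Type) [AddCommGroup M] [Module (PolyS K n) M]
    (hMfl : IsGradedFiniteLength K n M)
    (res : MinimalResolution K n M) :
    Subsingleton (Hstar K n (2*k - 3)
      (Sym2M (PolyS K n) ↥(LinearMap.range (res.d (n - k))))) ∧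
    Subsingleton (Hstar K n (2*k - 2)
      (Sym2M (PolyS K n) ↥(LinearMap.range (res.d (n - k))))) := by
  obtain ⟨_, c, hc⟩ := hMfl
  have h := syz_sym_depth res hc k (n - k) (by omega) (by omega)
  exact ⟨h.vanish (2 * k - 3 + 1) (by omega), h.vanish (2 * k - 2 + 1) (by omega)⟩
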